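/- Let m ≥ 1, κ, Γ > 0, α ∈ (0,1), μ > 0, t₁ ≥ 0. Let N : ℝ → ℝ^{n×m} and M : ℝ → ℝ^{m×m} be continuous with M(t) symmetric positive semidefinite for all t ≥ 0 and M(t) ⪰ μ·I_m for all t ≥ t₁. Let θ : ℝ → ℝ^m be differentiable and satisfy θ'(t) = −κ·N(t)ᵀ(⌈N(t)θ(t)⌋^{1−α} + ⌈N(t)θ(t)⌋^{1+α}) − Γ·M(t)ᵀ(⌈M(t)θ(t)⌋^{1−α} + ⌈M(t)θ(t)⌋^{1+α}). Then θ(t) = 0 for all t ≥ t₁ + (2/α)·(1/κ₁ + 1/κ₂), where κ₁ = 2^{(2−α)/2}·Γ·μ^{2−α} and κ₂ = 2^{(2+α)/2}·m^{−α/2}·Γ·μ^{2+α}; in particular this settling-time bound is independent of the value θ(t₁) (fixed-time convergence). -/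

import Mathlib

open scoped Matrix
open Finset

/-- The componentwise signed power `⌈v⌋^β`, with `i`-th component `|v_i|^β · sgn(v_i)`. -/
noncomputable def signedPow {d : ℕ} (β : ℝ) (v : Fin d → ℝ) : Fin d → ℝ :=
  fun i => |v i| ^ β * Real.sign (v i)

/-! The Lyapunov function `V = ½‖θ‖²` decays along the update law: for any matrix `A`, pairing
`θ` with `Aᵀ⌈Aθ⌋^β` gives `∑ i, |(Aθ)ᵢ|^(1+β)`, so the `N`-term only helps, while the bound
`‖M θ‖ ≥ μ‖θ‖` and the comparison of `ℓ^(1+β)` with `ℓ²` turn the `M`-term into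
`V' ≤ -κ₁ V^(1-α/2) - κ₂ V^(1+α/2)`. While `V > 0`, the power `u = V^(α/2)` satisfies the Riccati
inequality `u' ≤ -(α/2)(κ₁ + κ₂ u²)`, and by Cauchy–Schwarz `u / (1 + u) ∈ [0, 1)` decreases at
rate at least `(α/2) / (1/κ₁ + 1/κ₂)`, which limits the time during which `V` can be positive
independently of its initial value. -/

section DifferentialInequality

lemma sub_le_mul_sub_of_deriv_right_le {f f' : ℝ → ℝ} {a b C : ℝ} (hab : a ≤ b)
    (hf : ContinuousOn f (Set.Icc a b))
    (hf' : ∀ t ∈ Set.Ico a b, HasDerivWithinAt f (f' t) (Set.Ici t) t)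
    (hC : ∀ t ∈ Set.Ico a b, f' t ≤ C) :
    f b - f a ≤ C * (b - a) := by
  have hline : ∀ t, HasDerivAt (fun s => f a + C * (s - a)) C t := fun t => by
    simpa using (((hasDerivAt_id t).sub_const a).const_mul C).const_add (f a)
  have hb := image_le_of_deriv_right_le_deriv_boundary hf hf' (by simp)
    (fun t _ => (hline t).continuousAt.continuousWithinAt)
    (fun t _ => (hline t).hasDerivWithinAt) hC (Set.right_mem_Icc.2 hab)
  linarith

lemma one_add_sq_le_inv_add_inv_mul {a b : ℝ} (ha : 0 < a) (hb : 0 < b) (u : ℝ) :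
    (1 + u) ^ 2 ≤ (1 / a + 1 / b) * (a + b * u ^ 2) := by
  have hdefect : (1 / a + 1 / b) * (a + b * u ^ 2) - (1 + u) ^ 2 = (b * u - a) ^ 2 / (a * b) := by
    field_simp
    ring
  have : 0 ≤ (b * u - a) ^ 2 / (a * b) := by positivity
  linarith

lemma sub_lt_inv_add_inv_of_deriv_right_le_riccati {u u' : ℝ → ℝ} {a b c₁ c₂ : ℝ} (hab : a ≤ b)
    (hc₁ : 0 < c₁) (hc₂ : 0 < c₂) (hu : ContinuousOn u (Set.Icc a b))
    (hu' : ∀ t ∈ Set.Ico a b, HasDerivWithinAt u (u' t) (Set.Ici t) t)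
    (hu0 : ∀ t ∈ Set.Icc a b, 0 ≤ u t)
    (hric : ∀ t ∈ Set.Ico a b, u' t ≤ -(c₁ + c₂ * u t ^ 2)) :
    b - a < 1 / c₁ + 1 / c₂ := by
  set A := 1 / c₁ + 1 / c₂
  have hA0 : 0 < A := by positivity
  have hpos : ∀ t ∈ Set.Icc a b, 0 < 1 + u t := fun t ht => by linarith [hu0 t ht]
  have hderiv : ∀ t ∈ Set.Ico a b,
      HasDerivWithinAt (fun s => u s / (1 + u s)) (u' t / (1 + u t) ^ 2) (Set.Ici t) t :=
    fun t ht => ((hu' t ht).fun_div ((hu' t ht).const_add 1)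
      (hpos t (Set.Ico_subset_Icc_self ht)).ne').congr_deriv (by ring)
  have hrate : ∀ t ∈ Set.Ico a b, u' t / (1 + u t) ^ 2 ≤ -(1 / A) := fun t ht => by
    have h1u := hpos t (Set.Ico_subset_Icc_self ht)
    have hcs := one_add_sq_le_inv_add_inv_mul hc₁ hc₂ (u t)
    rw [div_le_iff₀ (by positivity), neg_mul, one_div_mul_eq_div]
    refine (hric t ht).trans (neg_le_neg ?_)
    rwa [div_le_iff₀' hA0]
  have hdrop : u b / (1 + u b) - u a / (1 + u a) ≤ -(1 / A) * (b - a) :=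
    sub_le_mul_sub_of_deriv_right_le hab
      (hu.div (continuousOn_const.add hu) fun t ht => (hpos t ht).ne') hderiv hrate
  have hstart : u a / (1 + u a) < 1 := by
    rw [div_lt_one (hpos a (Set.left_mem_Icc.2 hab))]
    linarith
  have hend : 0 ≤ u b / (1 + u b) :=
    div_nonneg (hu0 b (Set.right_mem_Icc.2 hab)) (hpos b (Set.right_mem_Icc.2 hab)).le
  have hfrac : (b - a) / A < 1 := by
    rw [div_eq_inv_mul, ← one_div]
    linarith
  exact (div_lt_one hA0).1 hfrac

lemma mul_rpow_sub_one_le_riccati {v v' γ k₁ k₂ : ℝ} (hv : 0 < v) (hγ : 0 ≤ γ)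
    (h : v' ≤ -(k₁ * v ^ (1 - γ)) - k₂ * v ^ (1 + γ)) :
    v' * γ * v ^ (γ - 1) ≤ -(γ * k₁ + γ * k₂ * (v ^ γ) ^ 2) := by
  have hlow : v ^ (1 - γ) * v ^ (γ - 1) = 1 := by
    rw [← Real.rpow_add hv]
    simp
  have hhigh : v ^ (1 + γ) * v ^ (γ - 1) = (v ^ γ) ^ 2 := by
    rw [sq, ← Real.rpow_add hv, ← Real.rpow_add hv]
    ring_nf
  calc v' * γ * v ^ (γ - 1) = v' * (γ * v ^ (γ - 1)) := by ring
    _ ≤ (-(k₁ * v ^ (1 - γ)) - k₂ * v ^ (1 + γ)) * (γ * v ^ (γ - 1)) := by gcongr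
    _ = -(γ * k₁ * (v ^ (1 - γ) * v ^ (γ - 1)) +
          γ * k₂ * (v ^ (1 + γ) * v ^ (γ - 1))) := by ring
    _ = -(γ * k₁ + γ * k₂ * (v ^ γ) ^ 2) := by rw [hlow, hhigh, mul_one]

theorem eq_zero_of_deriv_right_le_fixedTime {V V' : ℝ → ℝ} {γ k₁ k₂ t₁ T : ℝ}
    (hγ : 0 < γ) (hk₁ : 0 < k₁) (hk₂ : 0 < k₂) (hV : ContinuousOn V (Set.Ici t₁))
    (hV' : ∀ t, t₁ ≤ t → HasDerivWithinAt V (V' t) (Set.Ici t) t)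
    (hV0 : ∀ t, t₁ ≤ t → 0 ≤ V t)
    (hdecay : ∀ t, t₁ ≤ t → V' t ≤ -(k₁ * V t ^ (1 - γ)) - k₂ * V t ^ (1 + γ))
    (hT : t₁ + 1 / γ * (1 / k₁ + 1 / k₂) ≤ T) : V T = 0 := by
  have ht₁T : t₁ ≤ T := le_trans (le_add_of_nonneg_right (by positivity)) hT
  by_contra hne
  have hVT : 0 < V T := lt_of_le_of_ne' (hV0 T ht₁T) hne
  have hV'0 : ∀ t, t₁ ≤ t → V' t ≤ 0 := fun t ht => by
    have h₁ := mul_nonneg hk₁.le (Real.rpow_nonneg (hV0 t ht) (1 - γ))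
    have h₂ := mul_nonneg hk₂.le (Real.rpow_nonneg (hV0 t ht) (1 + γ))
    linarith [hdecay t ht]
  have hpos : ∀ t ∈ Set.Icc t₁ T, 0 < V t := fun t ht => by
    have := sub_le_mul_sub_of_deriv_right_le ht.2
      (hV.mono fun s hs => ht.1.trans hs.1) (fun s hs => hV' s (ht.1.trans hs.1))
      fun s hs => hV'0 s (ht.1.trans hs.1)
    linarith
  have hlt : T - t₁ < 1 / (γ * k₁) + 1 / (γ * k₂) :=
    sub_lt_inv_add_inv_of_deriv_right_le_riccati ht₁T (by positivity) (by positivity)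
      ((hV.mono Set.Icc_subset_Ici_self).rpow_const fun t ht => Or.inl (hpos t ht).ne')
      (fun t ht => (hV' t ht.1).rpow_const (Or.inl (hpos t (Set.Ico_subset_Icc_self ht)).ne'))
      (fun t ht => Real.rpow_nonneg (hpos t ht).le γ)
      fun t ht => mul_rpow_sub_one_le_riccati (hpos t (Set.Ico_subset_Icc_self ht)) hγ.le
        (hdecay t ht.1)
  have hsplit : 1 / γ * (1 / k₁ + 1 / k₂) = 1 / (γ * k₁) + 1 / (γ * k₂) := by
    field_simp
  linarith

end DifferentialInequality

section SignedPower

lemma rpow_sum_le_sum_rpow {ι : Type*} (s : Finset ι) {f : ι → ℝ} {q : ℝ} (hq : 0 < q)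
    (hq1 : q ≤ 1) (hf : ∀ i ∈ s, 0 ≤ f i) : (∑ i ∈ s, f i) ^ q ≤ ∑ i ∈ s, f i ^ q :=
  le_sum_of_subadditive_on_pred (· ^ q) (0 ≤ ·) (Real.zero_rpow hq.ne').le
    (fun _ _ hx hy => Real.rpow_add_le_add_rpow hx hy hq.le hq1)
    (fun _ _ => add_nonneg) f hf

lemma mul_abs_rpow_mul_sign {β : ℝ} (hβ : 1 + β ≠ 0) (x : ℝ) :
    x * (|x| ^ β * Real.sign x) = (x * x) ^ ((1 + β) / 2) := by
  rcases eq_or_ne x 0 with rfl | hx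
  · rw [zero_mul, zero_mul, Real.zero_rpow (div_ne_zero hβ two_ne_zero)]
  · have hsign : x * Real.sign x = |x| := by
      rcases hx.lt_or_gt with hx | hx
      · rw [Real.sign_of_neg hx, abs_of_neg hx, mul_neg_one]
      · rw [Real.sign_of_pos hx, abs_of_pos hx, mul_one]
    calc x * (|x| ^ β * Real.sign x) = |x| * |x| ^ β := by rw [mul_left_comm, hsign, mul_comm]
      _ = |x| ^ (1 + β) := by rw [Real.rpow_add (abs_pos.2 hx), Real.rpow_one]
      _ = (|x| ^ (2 : ℝ)) ^ ((1 + β) / 2) := by rw [← Real.rpow_mul (abs_nonneg x)]; ring_nf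
      _ = (x * x) ^ ((1 + β) / 2) := by rw [Real.rpow_two, sq_abs, sq]

variable {d : ℕ}

lemma dotProduct_signedPow_nonneg (β : ℝ) (v : Fin d → ℝ) : 0 ≤ v ⬝ᵥ signedPow β v :=
  sum_nonneg fun i _ => by
    rw [signedPow, mul_left_comm, mul_comm (v i)]
    exact mul_nonneg (Real.rpow_nonneg (abs_nonneg _) _) (Real.sign_mul_nonneg (v i))

variable {β : ℝ}

lemma dotProduct_signedPow (hβ : 1 + β ≠ 0) (v : Fin d → ℝ) :
    v ⬝ᵥ signedPow β v = ∑ i, (v i * v i) ^ ((1 + β) / 2) :=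
  sum_congr rfl fun i _ => mul_abs_rpow_mul_sign hβ (v i)

lemma rpow_dotProduct_self_le_dotProduct_signedPow (hβ : -1 < β) (hβ1 : β ≤ 1)
    (v : Fin d → ℝ) : (v ⬝ᵥ v) ^ ((1 + β) / 2) ≤ v ⬝ᵥ signedPow β v := by
  rw [dotProduct_signedPow (by linarith)]
  exact rpow_sum_le_sum_rpow _ (by linarith) (by linarith) fun i _ => mul_self_nonneg (v i)

lemma card_rpow_mul_rpow_dotProduct_self_le_dotProduct_signedPow (hd : 0 < d) (hβ : 1 ≤ β)
    (v : Fin d → ℝ) :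
    (d : ℝ) ^ ((1 - β) / 2) * (v ⬝ᵥ v) ^ ((1 + β) / 2) ≤ v ⬝ᵥ signedPow β v := by
  have hmean := Real.rpow_sum_le_const_mul_sum_rpow_of_nonneg (f := fun i => v i * v i) univ
    (p := (1 + β) / 2) (by linarith) fun i _ => mul_self_nonneg (v i)
  rw [← dotProduct_signedPow (by linarith), card_univ, Fintype.card_fin] at hmean
  have hd0 : (0 : ℝ) < d := Nat.cast_pos.2 hd
  rw [show (1 - β) / 2 = -((1 + β) / 2 - 1) by ring, Real.rpow_neg hd0.le,
    inv_mul_le_iff₀ (by positivity)]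
  exact hmean

end SignedPower

section Energy

/-- The Lyapunov function `V = ½‖x‖²` of the convergence argument. The norm is Euclidean, hence
the dot product rather than the sup norm of `ι → ℝ`. -/
noncomputable def energy {ι : Type*} [Fintype ι] (x : ι → ℝ) : ℝ := 1 / 2 * (x ⬝ᵥ x)

variable {ι ι' : Type*} [Fintype ι] [Fintype ι']

lemma energy_nonneg (x : ι → ℝ) : 0 ≤ energy x :=
  mul_nonneg one_half_pos.le (dotProduct_self_star_nonneg x)

lemma energy_eq_zero {x : ι → ℝ} : energy x = 0 ↔ x = 0 := by
  simp [energy, dotProduct_self_eq_zero]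

lemma continuous_energy : Continuous (energy : (ι → ℝ) → ℝ) :=
  continuous_const.mul (continuous_id.dotProduct continuous_id)

lemma hasDerivWithinAt_energy {θ : ℝ → ι → ℝ} {θ' : ι → ℝ} {s : Set ℝ} {t : ℝ}
    (hθ : HasDerivWithinAt θ θ' s t) :
    HasDerivWithinAt (fun r => energy (θ r)) (θ t ⬝ᵥ θ') s t := by
  have hcoord := hasDerivWithinAt_pi.1 hθ
  refine ((HasDerivWithinAt.fun_sum fun i _ => (hcoord i).fun_mul (hcoord i)).const_mul
    (1 / 2 : ℝ)).congr_deriv ?_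
  rw [dotProduct, mul_sum]
  exact sum_congr rfl fun i _ => by ring

lemma rpow_mul_rpow_energy_le {μ r : ℝ} (hμ : 0 ≤ μ) (hr : 0 ≤ r) {x : ι → ℝ} {y : ι' → ℝ}
    (h : μ ^ 2 * (x ⬝ᵥ x) ≤ y ⬝ᵥ y) :
    (2 : ℝ) ^ (r / 2) * μ ^ r * energy x ^ (r / 2) ≤ (y ⬝ᵥ y) ^ (r / 2) := by
  have hx := energy_nonneg x
  have hμr : μ ^ r = (μ ^ 2) ^ (r / 2) := by
    rw [← Real.rpow_two, ← Real.rpow_mul hμ]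
    ring_nf
  rw [hμr, ← Real.mul_rpow (by positivity) (by positivity),
    ← Real.mul_rpow (by positivity) hx]
  refine Real.rpow_le_rpow (by positivity) (le_of_eq_of_le ?_ h) (by positivity)
  rw [energy]
  ring

lemma sq_mul_dotProduct_self_le {μ : ℝ} (hμ : 0 ≤ μ) {x y : ι → ℝ}
    (h : μ * (x ⬝ᵥ x) ≤ x ⬝ᵥ y) : μ ^ 2 * (x ⬝ᵥ x) ≤ y ⬝ᵥ y := by
  have hsq : 0 ≤ (y - μ • x) ⬝ᵥ (y - μ • x) := dotProduct_self_star_nonneg _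
  have hexpand : (y - μ • x) ⬝ᵥ (y - μ • x) =
      y ⬝ᵥ y - 2 * μ * (x ⬝ᵥ y) + μ ^ 2 * (x ⬝ᵥ x) := by
    simp only [sub_dotProduct, dotProduct_sub, smul_dotProduct, dotProduct_smul, smul_eq_mul,
      dotProduct_comm y x]
    ring
  linarith [mul_le_mul_of_nonneg_left h hμ]

lemma sq_mul_dotProduct_self_le_of_posSemidef_sub [DecidableEq ι] {μ : ℝ} (hμ : 0 ≤ μ)
    {A : Matrix ι ι ℝ} (hA : (A - μ • (1 : Matrix ι ι ℝ)).PosSemidef) (x : ι → ℝ) :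
    μ ^ 2 * (x ⬝ᵥ x) ≤ (A *ᵥ x) ⬝ᵥ (A *ᵥ x) := by
  have hquad := hA.dotProduct_mulVec_nonneg x
  simp only [star_trivial, Matrix.sub_mulVec, Matrix.smul_mulVec, Matrix.one_mulVec,
    dotProduct_sub, dotProduct_smul, smul_eq_mul] at hquad
  exact sq_mul_dotProduct_self_le hμ (sub_nonneg.1 hquad)

end Energy

section UpdateLaw

variable {m p : ℕ}

/-- The fixed-time feedback `Aᵀ(⌈Ax⌋^{1-α} + ⌈Ax⌋^{1+α})`, of which the error dynamics of the
update law are a combination, with `A` the filtered regressor `N` or the information matrix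
`M`. -/
noncomputable def fixedTimeFeedback (α : ℝ) (A : Matrix (Fin p) (Fin m) ℝ) (x : Fin m → ℝ) :
    Fin m → ℝ :=
  Aᵀ *ᵥ (signedPow (1 - α) (A *ᵥ x) + signedPow (1 + α) (A *ᵥ x))

lemma dotProduct_fixedTimeFeedback (α : ℝ) (A : Matrix (Fin p) (Fin m) ℝ) (x : Fin m → ℝ) :
    x ⬝ᵥ fixedTimeFeedback α A x =
      (A *ᵥ x) ⬝ᵥ signedPow (1 - α) (A *ᵥ x) + (A *ᵥ x) ⬝ᵥ signedPow (1 + α) (A *ᵥ x) := by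
  rw [fixedTimeFeedback, Matrix.dotProduct_mulVec, Matrix.vecMul_transpose, dotProduct_add]

lemma dotProduct_fixedTimeFeedback_nonneg (α : ℝ) (A : Matrix (Fin p) (Fin m) ℝ)
    (x : Fin m → ℝ) : 0 ≤ x ⬝ᵥ fixedTimeFeedback α A x := by
  rw [dotProduct_fixedTimeFeedback]
  exact add_nonneg (dotProduct_signedPow_nonneg _ _) (dotProduct_signedPow_nonneg _ _)

variable {α μ : ℝ}

lemma energy_rpow_add_le_dotProduct_fixedTimeFeedback (hp : 0 < p) (hα : α ∈ Set.Ico (0 : ℝ) 2)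
    (hμ : 0 ≤ μ) {A : Matrix (Fin p) (Fin m) ℝ} {x : Fin m → ℝ}
    (hA : μ ^ 2 * (x ⬝ᵥ x) ≤ (A *ᵥ x) ⬝ᵥ (A *ᵥ x)) :
    (2 : ℝ) ^ ((2 - α) / 2) * μ ^ (2 - α) * energy x ^ ((2 - α) / 2) +
      (p : ℝ) ^ (-α / 2) * ((2 : ℝ) ^ ((2 + α) / 2) * μ ^ (2 + α) * energy x ^ ((2 + α) / 2)) ≤
      x ⬝ᵥ fixedTimeFeedback α A x := by
  obtain ⟨hα0, hα2⟩ := hα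
  have hlow := rpow_dotProduct_self_le_dotProduct_signedPow (β := 1 - α) (by linarith)
    (by linarith) (A *ᵥ x)
  have hhigh := card_rpow_mul_rpow_dotProduct_self_le_dotProduct_signedPow (β := 1 + α) hp
    (by linarith) (A *ᵥ x)
  rw [show 1 + (1 - α) = 2 - α by ring] at hlow
  rw [show 1 + (1 + α) = 2 + α by ring, show 1 - (1 + α) = -α by ring] at hhigh
  rw [dotProduct_fixedTimeFeedback]
  refine add_le_add ((rpow_mul_rpow_energy_le hμ (by linarith) hA).trans hlow) (le_trans ?_ hhigh)
  gcongr
  exact rpow_mul_rpow_energy_le hμ (by linarith) hA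

lemma dotProduct_neg_smul_fixedTimeFeedback_sub_le {n : ℕ} (hp : 0 < p) {κ Γ : ℝ}
    (hκ : 0 ≤ κ) (hΓ : 0 ≤ Γ) (hα : α ∈ Set.Ico (0 : ℝ) 2) (hμ : 0 ≤ μ)
    (B : Matrix (Fin n) (Fin m) ℝ)
    {A : Matrix (Fin p) (Fin m) ℝ} {x : Fin m → ℝ}
    (hA : μ ^ 2 * (x ⬝ᵥ x) ≤ (A *ᵥ x) ⬝ᵥ (A *ᵥ x)) :
    x ⬝ᵥ ((-κ) • fixedTimeFeedback α B x - Γ • fixedTimeFeedback α A x) ≤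
      -((2 : ℝ) ^ ((2 - α) / 2) * Γ * μ ^ (2 - α) * energy x ^ ((2 - α) / 2)) -
        (2 : ℝ) ^ ((2 + α) / 2) * (p : ℝ) ^ (-α / 2) * Γ * μ ^ (2 + α) *
          energy x ^ ((2 + α) / 2) := by
  have hBdiss := mul_nonneg hκ (dotProduct_fixedTimeFeedback_nonneg α B x)
  have hAdiss := mul_le_mul_of_nonneg_left
    (energy_rpow_add_le_dotProduct_fixedTimeFeedback hp hα hμ hA) hΓ
  rw [dotProduct_sub, dotProduct_smul, dotProduct_smul, smul_eq_mul, smul_eq_mul]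
  linarith

end UpdateLaw

/-- For `1 < α` the law uses `⌈0⌋^{1-α}`, which `signedPow` sets to `0`; any other finite value
would do, since the energy balance multiplies it by `0`. -/
theorem fxt_parameter_convergence_general {n m p : ℕ} (hp : 0 < p) {κ Γ α μ t₁ : ℝ}
    (hκ : 0 ≤ κ) (hΓ : 0 < Γ) (hα : α ∈ Set.Ioo (0 : ℝ) 2) (hμ : 0 < μ)
    {N : ℝ → Matrix (Fin n) (Fin m) ℝ} {M : ℝ → Matrix (Fin p) (Fin m) ℝ}
    (hM : ∀ t, t₁ ≤ t → ∀ x, μ ^ 2 * (x ⬝ᵥ x) ≤ (M t *ᵥ x) ⬝ᵥ (M t *ᵥ x))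
    {θ : ℝ → Fin m → ℝ} (hθ : ContinuousOn θ (Set.Ici t₁))
    (hode : ∀ t, t₁ ≤ t → HasDerivWithinAt θ
      ((-κ) • fixedTimeFeedback α (N t) (θ t) - Γ • fixedTimeFeedback α (M t) (θ t))
      (Set.Ici t) t)
    {T : ℝ}
    (hT : t₁ + (2 / α) * (1 / ((2 : ℝ) ^ ((2 - α) / 2) * Γ * μ ^ (2 - α))
      + 1 / ((2 : ℝ) ^ ((2 + α) / 2) * (p : ℝ) ^ (-α / 2) * Γ * μ ^ (2 + α))) ≤ T) :
    θ T = 0 := by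
  have hα0 : 0 < α := hα.1
  have hp0 : (0 : ℝ) < p := Nat.cast_pos.2 hp
  rw [← one_div_div] at hT
  refine energy_eq_zero.1 (eq_zero_of_deriv_right_le_fixedTime (V := fun t => energy (θ t))
    (by positivity) (by positivity) (by positivity) (continuous_energy.comp_continuousOn hθ)
    (fun t ht => hasDerivWithinAt_energy (hode t ht)) (fun t _ => energy_nonneg (θ t))
    (fun t ht => ?_) hT)
  rw [show 1 - α / 2 = (2 - α) / 2 by ring, show 1 + α / 2 = (2 + α) / 2 by ring]
  exact dotProduct_neg_smul_fixedTimeFeedback_sub_le hp hκ hΓ.le (Set.Ioo_subset_Ico_self hα)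
    hμ.le (N t) (hM t ht (θ t))

/-- **Disturbance-free fixed-time parameter convergence.**
Under the fixed-time update law with `M(t) ⪰ μI` for `t ≥ t₁`, the estimation error
satisfies `θ(t) = 0` for all `t ≥ t₁ + (2/α)(1/κ₁ + 1/κ₂)`, where
`κ₁ = 2^{(2−α)/2} Γ μ^{2−α}` and `κ₂ = 2^{(2+α)/2} m^{−α/2} Γ μ^{2+α}`;
the settling-time bound is independent of `θ(t₁)`. -/
theorem fxt_parameter_convergence (n m : ℕ) (hm : 1 ≤ m) (κ Γ α μ t₁ : ℝ)
    (hκ : 0 < κ) (hΓ : 0 < Γ) (hα : α ∈ Set.Ioo (0:ℝ) 1) (hμ : 0 < μ) (ht₁ : 0 ≤ t₁)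
    (N : ℝ → Matrix (Fin n) (Fin m) ℝ) (M : ℝ → Matrix (Fin m) (Fin m) ℝ)
    (hNc : Continuous N) (hMc : Continuous M)
    (hMpsd : ∀ t : ℝ, 0 ≤ t → (M t).PosSemidef)
    (hMμ : ∀ t : ℝ, t₁ ≤ t → (M t - μ • (1 : Matrix (Fin m) (Fin m) ℝ)).PosSemidef)
    (θ θ' : ℝ → Fin m → ℝ)
    (hθ : ∀ t, HasDerivAt θ (θ' t) t)
    (hode : ∀ t : ℝ, θ' t =
        (-κ) • ((N t)ᵀ *ᵥ (signedPow (1 - α) (N t *ᵥ θ t) + signedPow (1 + α) (N t *ᵥ θ t)))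
        - Γ • ((M t)ᵀ *ᵥ (signedPow (1 - α) (M t *ᵥ θ t) + signedPow (1 + α) (M t *ᵥ θ t)))) :
    ∀ t : ℝ,
      t₁ + (2 / α) * (1 / ((2:ℝ) ^ ((2 - α) / 2) * Γ * μ ^ (2 - α))
          + 1 / ((2:ℝ) ^ ((2 + α) / 2) * (m : ℝ) ^ (-α / 2) * Γ * μ ^ (2 + α))) ≤ t →
      θ t = 0 := by
  intro T hT
  exact fxt_parameter_convergence_general hm hκ.le hΓ ⟨hα.1, hα.2.trans one_lt_two⟩ hμ
    (fun t ht => sq_mul_dotProduct_self_le_of_posSemidef_sub hμ.le (hMμ t ht))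
    (fun t _ => (hθ t).continuousAt.continuousWithinAt)
    (fun t _ => (hθ t).hasDerivWithinAt.congr_deriv (hode t)) hT
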